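/- Let α < β < γ be real numbers, Q(z) = (z−α)(z−β)(z−γ), P = Q'/2, and let n ≥ 1 be an integer. Then for each p ∈ {0, 1, …, n} there exists, up to multiplication of S by a nonzero constant, exactly one pair (V, S) of polynomials with deg V ≤ 1 and deg S = n satisfying Q·S'' + P·S' + V·S = 0 identically such that S has n simple real roots, exactly p of which lie in the open interval (α, β) and the remaining n−p in the open interval (β, γ). In particular there are exactly n+1 polynomials V of degree at most 1 for which the equation has a polynomial solution of degree n. -/

import Mathlib

open Polynomial

/-- `S` is a Stieltjes polynomial of the Lamé equation `Q S'' + P S' + V S = 0` of degree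
`n` with `n` simple real roots, exactly `p` of them in `(α,β)` and the remaining `n - p`
in `(β,γ)`, with Van Vleck polynomial `V` of degree at most 1. -/
def NiceSol (α β γ : ℝ) (Q P : Polynomial ℂ) (n p : ℕ) (V S : Polynomial ℂ) : Prop :=
  V.degree ≤ 1 ∧ S.natDegree = n ∧
  Q * (derivative (derivative S)) + P * (derivative S) + V * S = 0 ∧
  {z : ℂ | S.IsRoot z}.ncard = n ∧
  (∀ z : ℂ, S.IsRoot z → z.im = 0) ∧
  {z : ℂ | S.IsRoot z ∧ z.re ∈ Set.Ioo α β}.ncard = p ∧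
  {z : ℂ | S.IsRoot z ∧ z.re ∈ Set.Ioo β γ}.ncard = n - p

/-- The coefficient of `X` in a Van Vleck polynomial is determined by the degree of the solution. -/
theorem vanVleck_coeff_one {Q P V S : ℂ[X]} (hQ : Q.Monic) (hQ3 : Q.natDegree = 3)
    (hP : P = C (1 / 2 : ℂ) * derivative Q) (hV : V.degree ≤ 1) (hS : S ≠ 0)
    (h : Q * derivative (derivative S) + P * derivative S + V * S = 0) :
    V.coeff 1 = -((S.natDegree : ℂ) * (S.natDegree + 1 / 2)) := by
  have hV' : V.natDegree ≤ 1 := natDegree_le_of_degree_le hV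
  have hQc : Q.coeff 3 = 1 := by rw [← hQ3]; exact hQ
  have hP2 : P.natDegree ≤ 2 := by
    rw [hP]
    refine (natDegree_C_mul_le _ _).trans ((natDegree_derivative_le Q).trans ?_)
    omega
  have hPc : P.coeff 2 = 3 / 2 := by
    rw [hP, coeff_C_mul, coeff_derivative, hQc]; norm_num
  have hl : S.coeff S.natDegree ≠ 0 := by simpa using hS
  have h1 : (V * S).coeff (1 + S.natDegree) = V.coeff 1 * S.coeff S.natDegree :=
    coeff_mul_add_eq_of_natDegree_le hV' le_rfl
  have hc := congrArg (fun p : ℂ[X] => p.coeff (1 + S.natDegree)) h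
  simp only [coeff_add, h1, coeff_zero] at hc
  have hd1 := natDegree_derivative_le S
  have hd2 := natDegree_derivative_le (derivative S)
  obtain hn | hn | ⟨m, hn⟩ : S.natDegree = 0 ∨ S.natDegree = 1 ∨ ∃ m, S.natDegree = m + 2 := by
    rcases hS : S.natDegree with _ | _ | m <;> simp
  · have hd : derivative S = 0 := derivative_of_natDegree_zero hn
    rw [hd] at hc
    rw [hn] at hc hl ⊢
    simpa [hl] using hc
  · have hd : derivative (derivative S) = 0 := derivative_of_natDegree_zero (by omega)
    have h2 : (P * derivative S).coeff (2 + 0) = P.coeff 2 * (derivative S).coeff 0 :=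
      coeff_mul_add_eq_of_natDegree_le hP2 (by omega)
    rw [hd] at hc
    rw [hn] at hc hl ⊢
    norm_num at hc h2
    rw [h2, hPc, coeff_derivative] at hc
    norm_num at hc
    apply mul_right_cancel₀ hl
    push_cast
    linear_combination hc
  · have h2 : (P * derivative S).coeff (2 + (m + 1)) = P.coeff 2 * (derivative S).coeff (m + 1) :=
      coeff_mul_add_eq_of_natDegree_le hP2 (by omega)
    have h3 : (Q * derivative (derivative S)).coeff (3 + m) =
        Q.coeff 3 * (derivative (derivative S)).coeff m :=
      coeff_mul_add_eq_of_natDegree_le hQ3.le (by omega)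
    rw [hn] at hc hl ⊢
    rw [show 2 + (m + 1) = 1 + (m + 2) by ring, hPc, coeff_derivative] at h2
    rw [show 3 + m = 1 + (m + 2) by ring, hQc, coeff_derivative, coeff_derivative] at h3
    rw [h2, h3] at hc
    apply mul_right_cancel₀ hl
    push_cast at hc ⊢
    linear_combination hc

/-- The equation `m (m + 1/2) = n (n + 1/2)` forces `m = n`. -/
theorem eq_of_mul_add_half_eq {m n : ℕ}
    (h : (m : ℂ) * (m + 1 / 2) = (n : ℂ) * (n + 1 / 2)) : m = n := by
  have h' : ((2 * m * m + m : ℕ) : ℂ) = ((2 * n * n + n : ℕ) : ℂ) := by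
    push_cast; linear_combination 2 * h
  have h'' : 2 * m * m + m = 2 * n * n + n := by exact_mod_cast h'
  rcases lt_trichotomy m n with hlt | heq | hlt
  · nlinarith
  · exact heq
  · nlinarith

/-- Two polynomial solutions with the same Van Vleck polynomial and degree are proportional. -/
theorem stieltjes_proportional {Q P V S T : ℂ[X]} (hQ : Q.Monic) (hQ3 : Q.natDegree = 3)
    (hP : P = C (1 / 2 : ℂ) * derivative Q) (hV : V.degree ≤ 1) (hS : S ≠ 0) (hT : T ≠ 0)
    (hSe : Q * derivative (derivative S) + P * derivative S + V * S = 0)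
    (hTe : Q * derivative (derivative T) + P * derivative T + V * T = 0) :
    ∃ c : ℂ, c ≠ 0 ∧ T = C c * S := by
  have hS1 := vanVleck_coeff_one hQ hQ3 hP hV hS hSe
  have hlS : S.leadingCoeff ≠ 0 := by simpa using hS
  have hlT : T.leadingCoeff ≠ 0 := by simpa using hT
  refine ⟨T.leadingCoeff / S.leadingCoeff, div_ne_zero hlT hlS, ?_⟩
  set c := T.leadingCoeff / S.leadingCoeff with hc
  by_contra hne
  have hD : T - C c * S ≠ 0 := sub_ne_zero.2 hne
  have hdeg : ∀ U : ℂ[X], U ≠ 0 →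
      Q * derivative (derivative U) + P * derivative U + V * U = 0 →
      U.natDegree = S.natDegree := fun U hU hUe =>
    eq_of_mul_add_half_eq (neg_injective
      ((vanVleck_coeff_one hQ hQ3 hP hV hU hUe).symm.trans hS1))
  have hDn := hdeg _ hD (by
    simp only [derivative_sub, derivative_C_mul]
    linear_combination hTe - C c * hSe)
  have hTn := hdeg _ hT hTe
  apply hD
  rw [← leadingCoeff_eq_zero, leadingCoeff, hDn, coeff_sub, coeff_C_mul]
  rw [leadingCoeff, leadingCoeff, hTn] at hc
  rw [hc, div_mul_cancel₀ _ (by exact hlS), sub_self]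

/-- There are at most `n + 1` Van Vleck polynomials for solutions of degree `n`. -/
theorem vanVleck_finite_and_ncard_le {Q P : ℂ[X]} (hQ : Q.Monic) (hQ3 : Q.natDegree = 3)
    (hP : P = C (1 / 2 : ℂ) * derivative Q) (n : ℕ) :
    {V : ℂ[X] | V.degree ≤ 1 ∧ ∃ S : ℂ[X], S.natDegree = n ∧ S ≠ 0 ∧
      Q * (derivative (derivative S)) + P * (derivative S) + V * S = 0}.Finite ∧
    {V : ℂ[X] | V.degree ≤ 1 ∧ ∃ S : ℂ[X], S.natDegree = n ∧ S ≠ 0 ∧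
      Q * (derivative (derivative S)) + P * (derivative S) + V * S = 0}.ncard ≤ n + 1 := by
  set A := {V : ℂ[X] | V.degree ≤ 1 ∧ ∃ S : ℂ[X], S.natDegree = n ∧ S ≠ 0 ∧
      Q * (derivative (derivative S)) + P * (derivative S) + V * S = 0}
  choose S hSn hS0 hSe using fun V : A => V.2.2
  let a : ℂ := -((n : ℂ) * (n + 1 / 2))
  have hVeq : ∀ V : A, (V : ℂ[X]) = C a * X + C ((V : ℂ[X]).coeff 0) := fun V => by
    have h1 := vanVleck_coeff_one hQ hQ3 hP V.2.1 (hS0 V) (hSe V)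
    rw [hSn] at h1
    conv_lhs => rw [eq_X_add_C_of_degree_le_one V.2.1, h1]
  let T : Module.End ℂ ℂ[X] :=
    LinearMap.mulLeft ℂ Q ∘ₗ derivative ∘ₗ derivative + LinearMap.mulLeft ℂ P ∘ₗ derivative +
      LinearMap.mulLeft ℂ (C a * X)
  have hinj : Function.Injective fun V : A => -(V : ℂ[X]).coeff 0 := fun V W h => by
    have h' : (V : ℂ[X]).coeff 0 = (W : ℂ[X]).coeff 0 := neg_injective h
    apply Subtype.ext
    rw [hVeq V, hVeq W, h']
  have hli : LinearIndependent ℂ S := by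
    refine Module.End.eigenvectors_linearIndependent' T _ hinj S fun V =>
      Module.End.hasEigenvector_iff.2 ⟨Module.End.mem_eigenspace_iff.2 ?_, hS0 V⟩
    have he := hSe V
    rw [hVeq V] at he
    simp only [T, LinearMap.add_apply, LinearMap.comp_apply, LinearMap.mulLeft_apply,
      smul_eq_C_mul, C_neg]
    linear_combination he
  have hmem : ∀ V : A, S V ∈ degreeLT ℂ (n + 1) := fun V => by
    rw [mem_degreeLT]
    refine (natDegree_lt_iff_degree_lt (hS0 V)).1 ?_
    rw [hSn]; omega
  have hli' : LinearIndependent ℂ fun V : A => (⟨S V, hmem V⟩ : degreeLT ℂ (n + 1)) :=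
    LinearIndependent.of_comp (degreeLT ℂ (n + 1)).subtype hli
  have : Module.Finite ℂ (degreeLT ℂ (n + 1)) := Module.Finite.equiv (degreeLTEquiv ℂ (n + 1)).symm
  have : Finite A := hli'.finite
  have := Fintype.ofFinite A
  refine ⟨Set.toFinite A, ?_⟩
  have hle := hli'.fintype_card_le_finrank
  rw [(degreeLTEquiv ℂ (n + 1)).finrank_eq, Module.finrank_fin_fun] at hle
  rwa [← Nat.card_coe_set_eq, Nat.card_eq_fintype_card]

/-- The product whose logarithm is, up to a negative factor, the electrostatic energy of unit
charges at the points `x i` in the field of fixed charges at the roots of `q`. -/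
noncomputable def stieltjesEnergy {n : ℕ} (q : ℝ[X]) (x : Fin n → ℝ) : ℝ :=
  (∏ i, q.eval (x i) ^ 2) * ∏ i, ∏ j, if j = i then 1 else (x i - x j) ^ 4

theorem continuous_stieltjesEnergy {n : ℕ} (q : ℝ[X]) :
    Continuous (stieltjesEnergy (n := n) q) := by
  unfold stieltjesEnergy
  refine Continuous.mul (continuous_finsetProd _ fun i _ => ?_)
    (continuous_finsetProd _ fun i _ => continuous_finsetProd _ fun j _ => ?_)
  · exact (q.continuous.comp (continuous_apply i)).pow 2
  · split_ifs
    · exact continuous_const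
    · fun_prop

theorem stieltjesEnergy_nonneg {n : ℕ} (q : ℝ[X]) (x : Fin n → ℝ) :
    0 ≤ stieltjesEnergy q x := by
  refine mul_nonneg (Finset.prod_nonneg fun i _ => by positivity)
    (Finset.prod_nonneg fun i _ => Finset.prod_nonneg fun j _ => ?_)
  split_ifs <;> positivity

theorem stieltjesEnergy_ne_zero_iff {n : ℕ} (q : ℝ[X]) (x : Fin n → ℝ) :
    stieltjesEnergy q x ≠ 0 ↔ (∀ i, q.eval (x i) ≠ 0) ∧ Function.Injective x := by
  simp only [stieltjesEnergy, mul_ne_zero_iff, Finset.prod_ne_zero_iff, Finset.mem_univ,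
    true_implies]
  refine and_congr (forall_congr' fun i => by simp) ⟨fun h i j hij => ?_, fun h i j => ?_⟩
  · by_contra hne
    have := h i j
    rw [if_neg (Ne.symm hne), hij] at this
    simp at this
  · split_ifs with hji
    · exact one_ne_zero
    · exact pow_ne_zero _ (sub_ne_zero.2 fun he => hji (h he).symm)

/-- The energy as a function of a single charge. -/
theorem exists_stieltjesEnergy_update {n : ℕ} (q : ℝ[X]) (x : Fin n → ℝ) (i : Fin n) :
    ∃ c : ℝ, ∀ t : ℝ, stieltjesEnergy q (Function.update x i t) =
      c * (q ^ 2 * (∏ j ∈ Finset.univ.erase i, (X - C (x j))) ^ 8).eval t := by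
  refine ⟨(∏ k ∈ Finset.univ.erase i, q.eval (x k) ^ 2) *
    ∏ k ∈ Finset.univ.erase i, ∏ j ∈ Finset.univ.erase i,
      if j = k then 1 else (x k - x j) ^ 4, fun t => ?_⟩
  have hne : ∀ k ∈ Finset.univ.erase i, Function.update x i t k = x k := fun k hk =>
    Function.update_of_ne (Finset.ne_of_mem_erase hk) _ _
  have h1 : ∏ k, q.eval (Function.update x i t k) ^ 2 =
      q.eval t ^ 2 * ∏ k ∈ Finset.univ.erase i, q.eval (x k) ^ 2 := by
    rw [← Finset.mul_prod_erase _ _ (Finset.mem_univ i), Function.update_self]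
    congr 1
    exact Finset.prod_congr rfl fun k hk => by rw [hne k hk]
  have hrow : (∏ j, if j = i then 1 else
      (Function.update x i t i - Function.update x i t j) ^ 4) =
      ∏ j ∈ Finset.univ.erase i, (t - x j) ^ 4 := by
    rw [← Finset.mul_prod_erase _ _ (Finset.mem_univ i), if_pos rfl, one_mul,
      Function.update_self]
    exact Finset.prod_congr rfl fun j hj => by
      rw [if_neg (Finset.ne_of_mem_erase hj), hne j hj]
  have hother : ∀ k ∈ Finset.univ.erase i, (∏ j, if j = k then 1 else
      (Function.update x i t k - Function.update x i t j) ^ 4) =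
      (t - x k) ^ 4 * ∏ j ∈ Finset.univ.erase i, if j = k then 1 else (x k - x j) ^ 4 := by
    intro k hk
    rw [← Finset.mul_prod_erase _ _ (Finset.mem_univ i),
      if_neg (Finset.ne_of_mem_erase hk).symm, Function.update_self, hne k hk]
    congr 1
    · ring
    · exact Finset.prod_congr rfl fun j hj => by rw [hne j hj]
  rw [stieltjesEnergy, h1, ← Finset.mul_prod_erase _ _ (Finset.mem_univ i), hrow,
    Finset.prod_congr rfl hother, Finset.prod_mul_distrib]
  simp only [eval_mul, eval_pow, eval_prod, eval_sub, eval_X, eval_C, Finset.prod_pow]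
  ring

/-- At an interior maximum of the energy, the second order operator applied to the polynomial
with roots `x i` vanishes at every `x i`. -/
theorem eval_eq_zero_of_isLocalMax_energy {n : ℕ} {q : ℝ[X]} {x : Fin n → ℝ}
    (hx : stieltjesEnergy q x ≠ 0) (i : Fin n)
    (hmax : IsLocalMax (fun t => stieltjesEnergy q (Function.update x i t)) (x i)) :
    (q * derivative (derivative (∏ j, (X - C (x j)))) +
      C (1 / 2) * derivative q * derivative (∏ j, (X - C (x j)))).eval (x i) = 0 := by
  obtain ⟨c, hc⟩ := exists_stieltjesEnergy_update q x i
  rw [← Finset.mul_prod_erase _ _ (Finset.mem_univ i)]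
  set R : ℝ[X] := ∏ j ∈ Finset.univ.erase i, (X - C (x j))
  have hx' := hc (x i)
  rw [Function.update_eq_self] at hx'
  rw [hx'] at hx
  have hc0 := left_ne_zero_of_mul hx
  have hG := right_ne_zero_of_mul hx
  simp only [eval_mul, eval_pow] at hG
  have hq0 : q.eval (x i) ≠ 0 := fun h => hG (by simp [h])
  have hR0 : R.eval (x i) ≠ 0 := fun h => hG (by simp [h])
  simp only [hc] at hmax
  have hd := hmax.hasDerivAt_eq_zero (((q ^ 2 * R ^ 8).hasDerivAt (x i)).const_mul c)
  have hd' := (mul_eq_zero.1 hd).resolve_left hc0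
  simp only [derivative_mul, derivative_pow, eval_add, eval_mul, eval_pow, eval_C,
    Nat.cast_ofNat] at hd'
  norm_num at hd'
  have key : (derivative q).eval (x i) * R.eval (x i) +
      4 * (q.eval (x i) * (derivative R).eval (x i)) = 0 := by
    have hne : 2 * q.eval (x i) * R.eval (x i) ^ 7 ≠ 0 := by positivity
    apply mul_left_cancel₀ hne
    linear_combination hd'
  simp
  linear_combination (1 / 2) * key

/-- A polynomial of degree `n` with prescribed distinct roots solves the equation as soon as
the second order operator applied to it vanishes at these roots. -/
theorem exists_vanVleck {n : ℕ} {q : ℝ[X]} (hq : q.natDegree = 3) {x : Fin n → ℝ}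
    (hx : Function.Injective x)
    (h : ∀ i, (q * derivative (derivative (∏ j, (X - C (x j)))) +
      C (1 / 2) * derivative q * derivative (∏ j, (X - C (x j)))).eval (x i) = 0) :
    ∃ v : ℝ[X], v.degree ≤ 1 ∧ q * derivative (derivative (∏ j, (X - C (x j)))) +
      C (1 / 2) * derivative q * derivative (∏ j, (X - C (x j))) +
      v * ∏ j, (X - C (x j)) = 0 := by
  set s : ℝ[X] := ∏ j, (X - C (x j)) with hs
  set L := q * derivative (derivative s) + C (1 / 2) * derivative q * derivative s with hL
  have hsm : s.Monic := monic_prod_of_monic _ _ fun j _ => monic_X_sub_C _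
  have hsn : s.natDegree = n := by simp [hs]
  obtain ⟨w, hw⟩ : s ∣ L :=
    Finset.prod_dvd_of_coprime
      (fun i _ j _ hij => (pairwise_coprime_X_sub_C hx) hij)
      fun i _ => dvd_iff_isRoot.2 (h i)
  refine ⟨-w, ?_, by rw [hw]; ring⟩
  rw [degree_neg]
  have hLd : L.natDegree ≤ n + 1 := by
    have d1 := natDegree_derivative_le s
    have d2 := natDegree_derivative_le (derivative s)
    have d3 := natDegree_derivative_le q
    have d4 := natDegree_C_mul_le (1 / 2 : ℝ) (derivative q)
    rcases Nat.lt_or_ge n 2 with hn2 | hn2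
    · have hz : derivative (derivative s) = 0 := derivative_of_natDegree_zero (by omega)
      rcases Nat.eq_zero_or_pos n with hn0 | hn0
      · have hz' : derivative s = 0 := derivative_of_natDegree_zero (by omega)
        simp [hL, hz']
      · rw [hL, hz, mul_zero, zero_add]
        exact natDegree_mul_le.trans (by omega)
    · refine natDegree_add_le_of_degree_le (natDegree_mul_le.trans ?_)
        (natDegree_mul_le.trans ?_) <;> omega
  rcases eq_or_ne w 0 with rfl | hw0
  · simp
  · rw [hw, hsm.natDegree_mul' hw0, hsn] at hLd
    exact degree_le_of_natDegree_le (n := 1) (by omega)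

/-- The energy has a critical point with `p` charges in `(α, β)` and the others in `(β, γ)`. -/
theorem exists_critical_configuration {α β γ : ℝ} (hαβ : α < β) (hβγ : β < γ) (n p : ℕ) :
    ∃ x : Fin n → ℝ, Function.Injective x ∧
      (∀ i : Fin n, x i ∈ if (i : ℕ) < p then Set.Ioo α β else Set.Ioo β γ) ∧
      stieltjesEnergy ((X - C α) * (X - C β) * (X - C γ)) x ≠ 0 ∧
      ∀ i, IsLocalMax (fun t => stieltjesEnergy ((X - C α) * (X - C β) * (X - C γ))
        (Function.update x i t)) (x i) := by
  set q : ℝ[X] := (X - C α) * (X - C β) * (X - C γ) with hq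
  have hq0 : ∀ t, q.eval t ≠ 0 ↔ t ≠ α ∧ t ≠ β ∧ t ≠ γ := fun t => by
    simp [hq, sub_eq_zero, and_assoc]
  let K : Set (Fin n → ℝ) :=
    Set.pi Set.univ fun i => if (i : ℕ) < p then Set.Icc α β else Set.Icc β γ
  have hK : IsCompact K := isCompact_univ_pi fun i => by
    split_ifs <;> exact isCompact_Icc
  obtain ⟨y, hyK, hy⟩ : ∃ y ∈ K, stieltjesEnergy q y ≠ 0 := by
    let u : Fin n → ℝ := fun i => ((i : ℕ) + 1 : ℝ) / (n + 1)
    have hu0 : ∀ i, 0 < u i := fun i => by positivity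
    have hu1 : ∀ i, u i < 1 := fun i => by
      rw [div_lt_one (by positivity)]
      exact_mod_cast Nat.add_lt_add_right i.2 1
    have huinj : Function.Injective u := fun i j hij => by
      have h := (div_left_inj' (by positivity : (n + 1 : ℝ) ≠ 0)).1 hij
      exact Fin.ext (by exact_mod_cast add_right_cancel h)
    let y : Fin n → ℝ := fun i =>
      if (i : ℕ) < p then α + (β - α) * u i else β + (γ - β) * u i
    have hlow : ∀ i, α < α + (β - α) * u i ∧ α + (β - α) * u i < β := fun i =>
      ⟨by nlinarith [hu0 i], by nlinarith [hu1 i]⟩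
    have hhigh : ∀ i, β < β + (γ - β) * u i ∧ β + (γ - β) * u i < γ := fun i =>
      ⟨by nlinarith [hu0 i], by nlinarith [hu1 i]⟩
    refine ⟨y, fun i _ => ?_, (stieltjesEnergy_ne_zero_iff _ _).2 ⟨fun i => ?_, fun i j hij => ?_⟩⟩
    · simp only [y]
      split_ifs
      · exact ⟨(hlow i).1.le, (hlow i).2.le⟩
      · exact ⟨(hhigh i).1.le, (hhigh i).2.le⟩
    · rw [hq0]
      have h1 := hlow i
      have h2 := hhigh i
      simp only [y]
      split_ifs
      · exact ⟨h1.1.ne', h1.2.ne, (h1.2.trans hβγ).ne⟩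
      · exact ⟨(hαβ.trans h2.1).ne', h2.1.ne', h2.2.ne⟩
    · simp only [y] at hij
      apply huinj
      split_ifs at hij
      · exact mul_left_cancel₀ (sub_pos.2 hαβ).ne' (add_left_cancel hij)
      · linarith [(hlow i).2, (hhigh j).1]
      · linarith [(hlow j).2, (hhigh i).1]
      · exact mul_left_cancel₀ (sub_pos.2 hβγ).ne' (add_left_cancel hij)
  obtain ⟨x, hxK, hmax⟩ :=
    hK.exists_isMaxOn ⟨y, hyK⟩ (continuous_stieltjesEnergy q).continuousOn
  have hx : stieltjesEnergy q x ≠ 0 :=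
    (((stieltjesEnergy_nonneg q y).lt_of_ne' hy).trans_le (hmax hyK)).ne'
  obtain ⟨hxq, hxinj⟩ := (stieltjesEnergy_ne_zero_iff q x).1 hx
  have hmem : ∀ i : Fin n, x i ∈ if (i : ℕ) < p then Set.Ioo α β else Set.Ioo β γ := fun i => by
    have h1 := hxK i (Set.mem_univ i)
    obtain ⟨h2, h3, h4⟩ := (hq0 _).1 (hxq i)
    dsimp only at h1
    split_ifs at h1 ⊢
    · exact ⟨h1.1.lt_of_ne' h2, h1.2.lt_of_ne h3⟩
    · exact ⟨h1.1.lt_of_ne' h3, h1.2.lt_of_ne h4⟩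
  refine ⟨x, hxinj, hmem, hx, fun i => ?_⟩
  have hnhds : (if (i : ℕ) < p then Set.Ioo α β else Set.Ioo β γ) ∈ nhds (x i) := by
    have h := hmem i
    split_ifs at h ⊢ <;> exact isOpen_Ioo.mem_nhds h
  filter_upwards [hnhds] with t ht
  rw [Function.update_eq_self]
  refine hmax fun j _ => ?_
  rcases eq_or_ne j i with rfl | hji
  · rw [Function.update_self]
    dsimp only
    split_ifs at ht ⊢ <;> exact Set.Ioo_subset_Icc_self ht
  · rw [Function.update_of_ne hji]
    exact hxK j (Set.mem_univ j)

theorem exists_niceSol {α β γ : ℝ} (hαβ : α < β) (hβγ : β < γ) {n p : ℕ} (hp : p ≤ n)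
    {Q P : ℂ[X]} (hQ : Q = (X - C (α : ℂ)) * (X - C (β : ℂ)) * (X - C (γ : ℂ)))
    (hP : P = C (1 / 2 : ℂ) * derivative Q) :
    ∃ V S : ℂ[X], NiceSol α β γ Q P n p V S := by
  obtain ⟨x, hinj, hmem, hne, hmax⟩ := exists_critical_configuration hαβ hβγ n p
  have hq3 : ((X - C α) * (X - C β) * (X - C γ) : ℝ[X]).natDegree = 3 := by
    rw [(((monic_X_sub_C α).mul (monic_X_sub_C β))).natDegree_mul (monic_X_sub_C γ),
      (monic_X_sub_C α).natDegree_mul (monic_X_sub_C β)]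
    simp
  obtain ⟨v, hv, he⟩ := exists_vanVleck hq3 hinj fun i =>
    eval_eq_zero_of_isLocalMax_energy hne i (hmax i)
  let z : Fin n → ℂ := fun i => (x i : ℂ)
  have hz : Function.Injective z := Complex.ofReal_injective.comp hinj
  have hroot : ∀ w : ℂ, (∏ j, (X - C (z j))).IsRoot w ↔ ∃ i, z i = w := fun w => by
    simp only [IsRoot, eval_prod, eval_sub, eval_X, eval_C, Finset.prod_eq_zero_iff,
      Finset.mem_univ, true_and, sub_eq_zero, eq_comm (a := w)]
  have hlt : ∀ i, x i ∈ Set.Ioo α β ↔ (i : ℕ) < p := fun i => by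
    have h := hmem i
    split_ifs at h with hi
    · exact iff_of_true h hi
    · exact iff_of_false (fun h' => lt_asymm h'.2 h.1) hi
  have hge : ∀ i, x i ∈ Set.Ioo β γ ↔ ¬ (i : ℕ) < p := fun i => by
    have h := hmem i
    split_ifs at h with hi
    · exact iff_of_false (fun h' => lt_asymm h'.1 h.2) (not_not.2 hi)
    · exact iff_of_true h hi
  have hcard : (Finset.univ.filter fun i : Fin n => (i : ℕ) < p).card = p := by
    rw [Fin.card_filter_val_lt, min_eq_right hp]
  have himage : ∀ I : Set ℝ, {w : ℂ | (∏ j, (X - C (z j))).IsRoot w ∧ w.re ∈ I} =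
      z '' {i | x i ∈ I} := fun I => by
    ext w
    simp only [Set.mem_ofPred_eq, hroot, Set.mem_image]
    constructor
    · rintro ⟨⟨i, rfl⟩, hi⟩
      exact ⟨i, hi, rfl⟩
    · rintro ⟨i, hi, rfl⟩
      exact ⟨⟨i, rfl⟩, hi⟩
  refine ⟨v.map Complex.ofRealHom, ∏ j, (X - C (z j)), degree_map_le.trans hv, by simp,
    ?_, ?_, ?_, ?_, ?_⟩
  · have h := congrArg (Polynomial.map Complex.ofRealHom) he
    simpa [Polynomial.map_prod, ← derivative_map, hP, hQ, z] using h
  · have : {w : ℂ | (∏ j, (X - C (z j))).IsRoot w} = Set.range z := by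
      ext w
      exact hroot w
    rw [this, ← Set.image_univ, Set.ncard_image_of_injective _ hz, Set.ncard_univ,
      Nat.card_fin]
  · intro w hw
    obtain ⟨i, rfl⟩ := (hroot w).1 hw
    exact Complex.ofReal_im _
  · rw [himage, Set.ncard_image_of_injective _ hz]
    simp only [hlt]
    rw [← Finset.coe_filter_univ, Set.ncard_coe_finset, hcard]
  · rw [himage, Set.ncard_image_of_injective _ hz]
    simp only [hge]
    have h := Finset.card_filter_add_card_filter_not (s := (Finset.univ : Finset (Fin n)))
      (fun i => (i : ℕ) < p)
    rw [hcard, Finset.card_univ, Fintype.card_fin] at h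
    rw [← Nat.eq_sub_of_add_eq' h, ← Finset.coe_filter_univ, Set.ncard_coe_finset]

/-- Stieltjes's theorem: for `Q(z) = (z-α)(z-β)(z-γ)` with `α < β < γ` real,
`P = Q'/2` and `n ≥ 1`, for each `p ≤ n` there is, up to scaling of `S`, exactly one pair
`(V, S)` with `deg V ≤ 1`, `deg S = n`, `Q S'' + P S' + V S = 0`, such that `S` has `n`
simple real roots, exactly `p` of them in `(α,β)` and `n - p` in `(β,γ)`. In particular
there are exactly `n + 1` Van Vleck polynomials `V` of degree at most 1 for which the
equation has a polynomial solution of degree `n`. -/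
theorem stmt18 (α β γ : ℝ) (hαβ : α < β) (hβγ : β < γ) (n : ℕ) (hn : 1 ≤ n)
    (Q : Polynomial ℂ)
    (hQ : Q = (X - C (α : ℂ)) * (X - C (β : ℂ)) * (X - C (γ : ℂ)))
    (P : Polynomial ℂ) (hP : P = C (1 / 2 : ℂ) * derivative Q) :
    (∀ p : ℕ, p ≤ n →
      ∃ V S : Polynomial ℂ, NiceSol α β γ Q P n p V S ∧
        ∀ V' S' : Polynomial ℂ, NiceSol α β γ Q P n p V' S' →
          V' = V ∧ ∃ c : ℂ, c ≠ 0 ∧ S' = C c * S) ∧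
    {V : Polynomial ℂ | V.degree ≤ 1 ∧ ∃ S : Polynomial ℂ, S.natDegree = n ∧ S ≠ 0 ∧
      Q * (derivative (derivative S)) + P * (derivative S) + V * S = 0}.ncard = n + 1 := by
  have hQm : Q.Monic := by
    rw [hQ]
    exact ((monic_X_sub_C _).mul (monic_X_sub_C _)).mul (monic_X_sub_C _)
  have hQ3 : Q.natDegree = 3 := by
    rw [hQ, ((monic_X_sub_C _).mul (monic_X_sub_C _)).natDegree_mul (monic_X_sub_C _),
      (monic_X_sub_C _).natDegree_mul (monic_X_sub_C _)]
    simp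
  obtain ⟨hfin, hle⟩ := vanVleck_finite_and_ncard_le hQm hQ3 hP n
  set A := {V : ℂ[X] | V.degree ≤ 1 ∧ ∃ S : ℂ[X], S.natDegree = n ∧ S ≠ 0 ∧
      Q * (derivative (derivative S)) + P * (derivative S) + V * S = 0}
  have hne : ∀ {p V S}, NiceSol α β γ Q P n p V S → S ≠ 0 := by
    rintro p V S h rfl
    have := h.2.1
    simp at this
    omega
  have hmemA : ∀ {p V S}, NiceSol α β γ Q P n p V S → V ∈ A := fun h =>
    ⟨h.1, _, h.2.1, hne h, h.2.2.1⟩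
  have hprop : ∀ {p p' V S S'}, NiceSol α β γ Q P n p V S → NiceSol α β γ Q P n p' V S' →
      ∃ c : ℂ, c ≠ 0 ∧ S' = C c * S := fun h h' =>
    stieltjes_proportional hQm hQ3 hP h.1 (hne h) (hne h') h.2.2.1 h'.2.2.1
  have huniq : ∀ {p p' V S S'}, NiceSol α β γ Q P n p V S → NiceSol α β γ Q P n p' V S' →
      p = p' := by
    intro p p' V S S' h h'
    obtain ⟨c, hc, rfl⟩ := hprop h h'
    have h1 := h.2.2.2.2.2.1
    have h2 := h'.2.2.2.2.2.1
    simp only [IsRoot, eval_mul, eval_C, mul_eq_zero, hc, false_or] at h1 h2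
    exact h1.symm.trans h2
  choose V S hVS using fun p : Fin (n + 1) =>
    exists_niceSol hαβ hβγ (Nat.lt_succ_iff.1 p.2) hQ hP
  have hVinj : Function.Injective V := fun p p' h =>
    Fin.ext (huniq (hVS p) (h ▸ hVS p'))
  have hcard : (Set.range V).ncard = n + 1 := by
    rw [← Set.image_univ, Set.ncard_image_of_injective _ hVinj, Set.ncard_univ, Nat.card_fin]
  have hrange : Set.range V = A :=
    Set.eq_of_subset_of_ncard_le (Set.range_subset_iff.2 fun p => hmemA (hVS p))
      (hle.trans hcard.ge) hfin
  refine ⟨fun p hp => ?_, hrange ▸ hcard⟩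
  refine ⟨V ⟨p, by omega⟩, S ⟨p, by omega⟩, hVS ⟨p, by omega⟩, fun V' S' h' => ?_⟩
  obtain ⟨r, rfl⟩ : V' ∈ Set.range V := hrange ▸ hmemA h'
  obtain rfl : (r : ℕ) = p := huniq (hVS r) h'
  exact ⟨rfl, hprop (hVS r) h'⟩
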